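/- Let α ∈ ℝ^d have strictly positive entries α_i > 0, let x ∈ ℝ^d satisfy Σ_{i=1}^d α_i · max(x_i, 0) > 1, and let K₊ = { y ∈ ℝ^d : y_i ≥ 0 for all i, and Σ_{i=1}^d α_i y_i ≤ 1 }, the intersection of the scaled ℓ₁-ball with the nonnegative orthant, a nonempty closed convex set. Then the Euclidean projection p of x onto K₊ satisfies: there exists λ > 0 such that for every index i, p_i = max(x_i − λ α_i, 0), and Σ_{i=1}^d α_i p_i = 1. -/

import Mathlib

open Finset

/-!
The soft-threshold mass `t ↦ ∑ αᵢ max (xᵢ - t αᵢ) 0` is continuous, exceeds `1` at `t = 0` and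
vanishes for large `t`, so it equals `1` at some `lam > 0` (`exists_threshold`). The thresholded
point `q` at this level lies in `K₊` and satisfies the variational inequality
`⟪x - q, y - q⟫ ≤ lam (∑ αᵢ yᵢ - 1) ≤ 0` for `y ∈ K₊`; in squared form,
`‖x - q‖² + ‖q - y‖² ≤ ‖x - y‖²`. For `y = p` the minimality of `p` forces `q = p`.
-/

theorem exists_threshold {d : ℕ} (α : Fin d → ℝ) (hα : ∀ i, 0 < α i)
    (x : Fin d → ℝ) (hx : 1 < ∑ i, α i * max (x i) 0) :
    ∃ t : ℝ, 0 < t ∧ ∑ i, α i * max (x i - t * α i) 0 = 1 := by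
  set g : ℝ → ℝ := fun t => ∑ i, α i * max (x i - t * α i) 0 with hg
  have hc : Continuous g := by fun_prop
  set T : ℝ := ∑ i, |x i| / α i with hT
  have hterm : ∀ i, 0 ≤ |x i| / α i := fun i => div_nonneg (abs_nonneg _) (hα i).le
  have hT0 : 0 ≤ T := Finset.sum_nonneg fun i _ => hterm i
  have hgT : g T = 0 := by
    refine Finset.sum_eq_zero fun i _ => ?_
    have h1 : |x i| / α i ≤ T :=
      Finset.single_le_sum (f := fun i => |x i| / α i) (fun j _ => hterm j) (Finset.mem_univ i)
    rw [div_le_iff₀ (hα i)] at h1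
    rw [max_eq_right (by linarith [le_abs_self (x i)]), mul_zero]
  have hg0 : 1 < g 0 := by simpa [hg] using hx
  obtain ⟨t, ht, hgt⟩ := intermediate_value_Icc' hT0 hc.continuousOn
    (show (1 : ℝ) ∈ Set.Icc (g T) (g 0) from ⟨by rw [hgT]; norm_num, hg0.le⟩)
  refine ⟨t, lt_of_le_of_ne ht.1 ?_, hgt⟩
  rintro rfl
  exact hg0.ne' hgt

/-- One coordinate of the variational inequality at the soft threshold `max (x - c) 0`: the
complementarity `(x - c - max (x - c) 0) * max (x - c) 0 = 0` holds, and its first factor is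
nonpositive. -/
theorem soft_threshold_coord (x c y : ℝ) (hy : 0 ≤ y) :
    (x - max (x - c) 0) ^ 2 + (max (x - c) 0 - y) ^ 2 - 2 * (c * (y - max (x - c) 0))
      ≤ (x - y) ^ 2 := by
  rcases le_total (x - c) 0 with h | h
  · rw [max_eq_right h]
    nlinarith [mul_nonneg hy (sub_nonneg.2 h)]
  · rw [max_eq_left h]
    nlinarith

/-- **Projection onto the nonnegative part of the scaled ℓ₁-ball.**
If `Σ αᵢ · max(xᵢ, 0) > 1` with all `αᵢ > 0`, and `p` is the Euclidean
projection of `x` onto `K₊ = {y | ∀ i, yᵢ ≥ 0, and Σ αᵢ yᵢ ≤ 1}`, then there is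
a `λ > 0` with `pᵢ = max(xᵢ − λ αᵢ, 0)` for all `i`, and `Σ αᵢ pᵢ = 1`. -/
theorem proj_scaled_l1_ball_nonneg_soft_threshold {d : ℕ}
    (α : Fin d → ℝ) (hα : ∀ i, 0 < α i)
    (x : EuclideanSpace ℝ (Fin d)) (hx : 1 < ∑ i, α i * max (x i) 0)
    (p : EuclideanSpace ℝ (Fin d))
    (hpK : (∀ i, 0 ≤ p i) ∧ ∑ i, α i * p i ≤ 1)
    (hmin : ∀ y : EuclideanSpace ℝ (Fin d),
      ((∀ i, 0 ≤ y i) ∧ ∑ i, α i * y i ≤ 1) → ‖x - p‖ ≤ ‖x - y‖) :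
    ∃ lam : ℝ, 0 < lam ∧
      (∀ i, p i = max (x i - lam * α i) 0) ∧
      ∑ i, α i * p i = 1 := by
  obtain ⟨lam, hlam, hsum⟩ := exists_threshold α hα x hx
  set q : EuclideanSpace ℝ (Fin d) := WithLp.toLp 2 fun i => max (x i - lam * α i) 0 with hq
  have hqi : ∀ i, q i = max (x i - lam * α i) 0 := fun i => rfl
  have hqsum : ∑ i, α i * q i = 1 := hsum
  have hle := hmin q ⟨fun i => le_max_right _ _, hqsum.le⟩
  have hsq : ‖x - p‖ ^ 2 ≤ ‖x - q‖ ^ 2 := by gcongr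
  have hvar : ‖x - q‖ ^ 2 + ‖q - p‖ ^ 2 - 2 * (lam * (∑ i, α i * p i - ∑ i, α i * q i))
      ≤ ‖x - p‖ ^ 2 := by
    simp only [EuclideanSpace.real_norm_sq_eq, PiLp.sub_apply]
    rw [← Finset.sum_sub_distrib, Finset.mul_sum, Finset.mul_sum, ← Finset.sum_add_distrib,
      ← Finset.sum_sub_distrib]
    refine Finset.sum_le_sum fun i _ => ?_
    have h := soft_threshold_coord (x i) (lam * α i) (p i) (hpK.1 i)
    rw [← hqi i] at h
    linarith
  have hprod : lam * (∑ i, α i * p i - ∑ i, α i * q i) ≤ 0 :=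
    mul_nonpos_of_nonneg_of_nonpos hlam.le (by linarith [hpK.2])
  have hzero : ‖q - p‖ ^ 2 = 0 := le_antisymm (by linarith) (sq_nonneg _)
  have hqp : q = p := by
    rwa [sq_eq_zero_iff, norm_eq_zero, sub_eq_zero] at hzero
  rw [← hqp]
  exact ⟨lam, hlam, hqi, hqsum⟩
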